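/- arXiv:1404.2144 — 3 statements merged into one kernel-verified Lean document; each statement's English description precedes it below -/
import Mathlib

section
/- Let p be a prime, R a commutative ring of characteristic p, φ a Frobenius splitting of R, Φ the standard splitting of R[X,Y] associated to φ, and (a_{ij}) a 2×2 matrix over R. Then for every integer s with 1 ≤ s ≤ p−1 one has Φ((a₁₁·X + a₁₂·Y)^s · (a₂₁·X + a₂₂·Y)^{p−s}) = φ(a₁₁^s · a₂₁^{p−s})·X + φ(a₁₂^s · a₂₂^{p−s})·Y. -/
open MvPolynomial

/-- A Frobenius splitting of a commutative ring `R` of characteristic `p`: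
an additive map `φ : R → R` with `φ 1 = 1` and `φ (a ^ p * b) = a * φ b`. -/
def IsFrobeniusSplitting (p : ℕ) {R : Type*} [CommRing R] (φ : R →+ R) : Prop :=
  φ 1 = 1 ∧ ∀ a b : R, φ (a ^ p * b) = a * φ b

open scoped Classical in
/-- `Φ` is the standard splitting of `R[X₁,…,X_r]` associated to `φ`:
on a monomial `c · X^I` it gives `φ c · X^(I/p)` if all components of `I`
are divisible by `p`, and `0` otherwise. -/
def IsStdSplitting (p : ℕ) {R : Type*} [CommRing R] {r : ℕ} (φ : R →+ R)
    (Φ : MvPolynomial (Fin r) R →+ MvPolynomial (Fin r) R) : Prop :=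
  ∀ (c : R) (I : Fin r →₀ ℕ),
    Φ (monomial I c) =
      if ∀ k, p ∣ I k then
        monomial (I.mapRange (· / p) (Nat.zero_div p)) (φ c)
      else 0

/-!
On coefficients, a standard splitting reads `coeff J (Φ f) = φ (coeff (p • J) f)`, so it maps forms
of degree `p` to linear forms, and the coefficient of `X k` in `Φ f` is `φ` of the coefficient of
`X k ^ p` in `f`. For a form `f` that coefficient is the value of `f` at the `k`-th unit vector, and
evaluation is multiplicative, so for a product of linear forms it is the product of their
coefficients at `X k`.
-/

section Homogeneous

variable {σ R : Type*} [CommSemiring R] {f : MvPolynomial σ R}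

theorem eval_piSingle_one_of_isHomogeneous [DecidableEq σ] {n : ℕ} (hf : f.IsHomogeneous n)
    (k : σ) : eval (Pi.single k 1) f = coeff (Finsupp.single k n) f := by
  have term_eq_zero (d : σ →₀ ℕ) (hd : d ∈ f.support) (hne : d ≠ Finsupp.single k n) :
      coeff d f * ∏ i ∈ d.support, (Pi.single k 1 : σ → R) i ^ d i = 0 := by
    obtain ⟨i, hi, hik⟩ : ∃ i ∈ d.support, i ≠ k := by
      by_contra! hsupp
      obtain ⟨m, rfl⟩ : ∃ m, d = Finsupp.single k m :=
        Finsupp.support_subset_singleton'.mp fun i hi => Finset.mem_singleton.mpr (hsupp i hi)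
      have hm : m = n := by
        simpa [Finsupp.weight_single] using hf (mem_support_iff.mp hd)
      exact hne (hm ▸ rfl)
    have hpow : (Pi.single k 1 : σ → R) i ^ d i = 0 := by
      rw [Pi.single_eq_of_ne hik, zero_pow (Finsupp.mem_support_iff.mp hi)]
    rw [Finset.prod_eq_zero hi hpow, mul_zero]
  rw [eval_eq, Finset.sum_eq_single (Finsupp.single k n) term_eq_zero]
  · rw [Finset.prod_eq_one, mul_one]
    intro i hi
    rw [Finset.mem_singleton.mp (Finsupp.support_single_subset hi), Pi.single_eq_same, one_pow]
  · intro hn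
    rw [notMem_support_iff.mp hn, zero_mul]

theorem isHomogeneous_sum_C_mul_X [Fintype σ] (b : σ → R) :
    (∑ k, C (b k) * X k).IsHomogeneous 1 :=
  .sum _ _ _ fun k _ => isHomogeneous_C_mul_X (b k) k

theorem eval_piSingle_one_sum_C_mul_X [Fintype σ] [DecidableEq σ] (b : σ → R) (k : σ) :
    eval (Pi.single k 1) (∑ i, C (b i) * X i) = b k := by
  simp [Pi.single_apply]

theorem eq_sum_C_eval_mul_X_of_isHomogeneous_one [Fintype σ] [DecidableEq σ]
    (hf : f.IsHomogeneous 1) : f = ∑ k, C (eval (Pi.single k 1) f) * X k := by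
  have hspan : f ∈ Submodule.span R (Set.range (X : σ → MvPolynomial σ R)) := by
    rwa [← homogeneousSubmodule_one_eq_span_X, mem_homogeneousSubmodule]
  obtain ⟨b, rfl⟩ := (Submodule.mem_span_range_iff_exists_fun R).mp hspan
  simp only [smul_eq_C_mul, eval_piSingle_one_sum_C_mul_X]

end Homogeneous

namespace IsStdSplitting

variable {p : ℕ} {R : Type*} [CommRing R] {r : ℕ} {φ : R →+ R}
  {Φ : MvPolynomial (Fin r) R →+ MvPolynomial (Fin r) R} {f : MvPolynomial (Fin r) R}

theorem coeff_apply (hΦ : IsStdSplitting p φ Φ) (hp : p ≠ 0) (f : MvPolynomial (Fin r) R)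
    (J : Fin r →₀ ℕ) : coeff J (Φ f) = φ (coeff (p • J) f) := by
  induction f using MvPolynomial.induction_on' with
  | add f g hf hg => simp only [map_add, coeff_add, hf, hg]
  | monomial I c =>
    rw [hΦ, coeff_monomial, apply_ite φ, map_zero]
    by_cases hdvd : ∀ k, p ∣ I k
    · have hdiv : I.mapRange (· / p) (Nat.zero_div p) = J ↔ I = p • J := by
        simp only [Finsupp.ext_iff, Finsupp.mapRange_apply, Finsupp.smul_apply, smul_eq_mul]
        exact forall_congr' fun k => Nat.div_eq_iff_eq_mul_right (Nat.pos_of_ne_zero hp) (hdvd k)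
      rw [if_pos hdvd, coeff_monomial, if_congr hdiv rfl rfl]
    · have hI : I ≠ p • J := by
        rintro rfl
        exact hdvd fun k => dvd_mul_right p (J k)
      rw [if_neg hdvd, if_neg hI, coeff_zero]

theorem isHomogeneous_apply (hΦ : IsStdSplitting p φ Φ) (hp : p ≠ 0) {n : ℕ}
    (hf : f.IsHomogeneous (p * n)) : (Φ f).IsHomogeneous n := by
  intro J hJ
  rw [hΦ.coeff_apply hp] at hJ
  have hcoeff : coeff (p • J) f ≠ 0 := fun h => hJ (by rw [h, map_zero])
  have hweight : p * Finsupp.weight 1 J = p * n := by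
    simpa only [map_nsmul, smul_eq_mul] using hf hcoeff
  exact Nat.eq_of_mul_eq_mul_left (Nat.pos_of_ne_zero hp) hweight

theorem apply_of_isHomogeneous (hΦ : IsStdSplitting p φ Φ) (hp : p ≠ 0)
    (hf : f.IsHomogeneous p) : Φ f = ∑ k, C (φ (eval (Pi.single k 1) f)) * X k := by
  have hlinear : (Φ f).IsHomogeneous 1 := hΦ.isHomogeneous_apply hp (by rwa [mul_one])
  rw [eq_sum_C_eval_mul_X_of_isHomogeneous_one hlinear]
  refine Finset.sum_congr rfl fun k _ => ?_
  rw [eval_piSingle_one_of_isHomogeneous hlinear, hΦ.coeff_apply hp, Finsupp.smul_single,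
    smul_eq_mul, mul_one, eval_piSingle_one_of_isHomogeneous hf]

end IsStdSplitting

theorem stmt2_general {p : ℕ} (hp : p ≠ 0) {R : Type*} [CommRing R] {r : ℕ} {φ : R →+ R}
    {Φ : MvPolynomial (Fin r) R →+ MvPolynomial (Fin r) R} (hΦ : IsStdSplitting p φ Φ)
    (b c : Fin r → R) {s : ℕ} (hs : s ≤ p) :
    Φ ((∑ k, C (b k) * X k) ^ s * (∑ k, C (c k) * X k) ^ (p - s)) =
      ∑ k, C (φ (b k ^ s * c k ^ (p - s))) * X k := by
  have hhom : ((∑ k, C (b k) * X k) ^ s * (∑ k, C (c k) * X k) ^ (p - s)).IsHomogeneous p := by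
    simpa only [one_mul, Nat.add_sub_cancel' hs] using
      ((isHomogeneous_sum_C_mul_X b).pow s).mul ((isHomogeneous_sum_C_mul_X c).pow (p - s))
  simp only [hΦ.apply_of_isHomogeneous hp hhom, map_mul, map_pow, eval_piSingle_one_sum_C_mul_X]

/-- Coefficient-comparison step in Lemma 2.2: in `R[X,Y]` (with `X = X 0`, `Y = X 1`),
for `1 ≤ s ≤ p - 1`,
`Φ((a₁₁X + a₁₂Y)^s (a₂₁X + a₂₂Y)^(p-s)) = φ(a₁₁^s a₂₁^(p-s)) X + φ(a₁₂^s a₂₂^(p-s)) Y`. -/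
theorem stmt2 (p : ℕ) (hp : p.Prime) (R : Type*) [CommRing R] [CharP R p]
    (φ : R →+ R) (hφ : IsFrobeniusSplitting p φ)
    (Φ : MvPolynomial (Fin 2) R →+ MvPolynomial (Fin 2) R)
    (hΦ : IsStdSplitting p φ Φ)
    (a : Matrix (Fin 2) (Fin 2) R) (s : ℕ) (hs1 : 1 ≤ s) (hs2 : s ≤ p - 1) :
    Φ ((C (a 0 0) * X 0 + C (a 0 1) * X 1) ^ s *
        (C (a 1 0) * X 0 + C (a 1 1) * X 1) ^ (p - s)) =
      C (φ (a 0 0 ^ s * a 1 0 ^ (p - s))) * X 0 +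
        C (φ (a 0 1 ^ s * a 1 1 ^ (p - s))) * X 1 := by
  simpa only [Fin.sum_univ_two] using
    stmt2_general hp.ne_zero hΦ (a 0) (a 1) (hs2.trans (Nat.sub_le p 1))
end

section
/- Let p be a prime, R a commutative ring of characteristic p, φ a Frobenius splitting of R, Φ the standard splitting of R[X,Y] associated to φ, and (a_{ij}) a 2×2 matrix over R. Assume that φ(c · a₁₁^s · a₂₁^{p−s}) = 0 and φ(c · a₁₂^s · a₂₂^{p−s}) = 0 for all c ∈ R and all integers 1 ≤ s ≤ p−1. Then Φ(c · (a₁₁·X + a₁₂·Y)^{q₁} · (a₂₁·X + a₂₂·Y)^{q₂}) = 0 for every c ∈ R and all integers q₁, q₂ with 1 ≤ q₁ ≤ p−1 and q₁ + q₂ = p. -/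
/-!
The standard splitting acts on coefficients by `coeff e (Φ F) = φ (coeff (p • e) F)`. If `F` is
homogeneous of degree `p`, the right-hand side is nonzero only for `e` of degree `1`, so `Φ F`
depends only on the coefficients of the pure powers `X k ^ p`. Such a coefficient is the value of
`F` at the `k`-th standard basis vector, which for a product of powers of linear forms is the
product of the same powers of their `k`-th coefficients.
-/

open MvPolynomial

theorem coeff_single_eq_eval_single_of_isHomogeneous {σ R : Type*} [DecidableEq σ]
    [CommSemiring R] {F : MvPolynomial σ R} {n : ℕ} (hF : F.IsHomogeneous n) (k : σ) :
    coeff (Finsupp.single k n) F = eval (Pi.single k 1) F := by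
  rw [eval_eq]
  symm
  refine (Finset.sum_eq_single (Finsupp.single k n) (fun d hd hne => ?_) fun hk => ?_).trans ?_
  · have hdeg : d.degree = n := by
      by_contra hdeg
      exact mem_support_iff.mp hd (hF.coeff_eq_zero hdeg)
    obtain ⟨j, hj, hjk⟩ : ∃ j ∈ d.support, j ≠ k := by
      by_contra! hsupp
      obtain ⟨m, rfl⟩ := Finsupp.support_subset_singleton'.mp
        (fun j hj => Finset.mem_singleton.mpr (hsupp j hj))
      exact hne (by rw [← hdeg, Finsupp.degree_single])
    rw [Finset.prod_eq_zero hj, mul_zero]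
    rw [Pi.single_eq_of_ne hjk, zero_pow (Finsupp.mem_support_iff.mp hj)]
  · rw [notMem_support_iff.mp hk, zero_mul]
  · rw [Finset.prod_eq_one, mul_one]
    intro j hj
    obtain rfl : j = k := Finset.mem_singleton.mp (Finsupp.support_single_subset hj)
    rw [Pi.single_eq_same, one_pow]

namespace IsStdSplitting

variable {p r : ℕ} {R : Type*} [CommRing R] {φ : R →+ R}
  {Φ : MvPolynomial (Fin r) R →+ MvPolynomial (Fin r) R}

theorem coeff_map (hΦ : IsStdSplitting p φ Φ) (hp : p ≠ 0) (F : MvPolynomial (Fin r) R)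
    (e : Fin r →₀ ℕ) : coeff e (Φ F) = φ (coeff (p • e) F) := by
  induction F using MvPolynomial.induction_on' with
  | add F G hF hG => simp only [map_add, coeff_add, hF, hG]
  | monomial d c =>
    rw [hΦ, coeff_monomial]
    split_ifs with hdvd hd hd
    · subst hd
      have hdiv : Finsupp.mapRange (· / p) (Nat.zero_div p) (p • e) = e := by
        ext k
        simp [Nat.mul_div_cancel_left _ (Nat.pos_of_ne_zero hp)]
      rw [hdiv, coeff_monomial, if_pos rfl]
    · rw [coeff_monomial, if_neg, map_zero]
      rintro rfl
      refine hd (Finsupp.ext fun k => ?_)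
      simp [Nat.mul_div_cancel' (hdvd k)]
    · exact absurd (fun k => by simp [hd]) hdvd
    · rw [coeff_zero, map_zero]

theorem map_eq_zero_of_isHomogeneous (hΦ : IsStdSplitting p φ Φ) (hp : p ≠ 0)
    {F : MvPolynomial (Fin r) R} (hF : F.IsHomogeneous p)
    (hvan : ∀ k, φ (eval (Pi.single k 1) F) = 0) : Φ F = 0 := by
  ext e
  rw [hΦ.coeff_map hp, coeff_zero]
  by_cases he : e.degree = 1
  · obtain ⟨k, rfl⟩ := (Finsupp.sum_eq_one_iff e).mp he
    rw [Finsupp.smul_single, smul_eq_mul, mul_one,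
      coeff_single_eq_eval_single_of_isHomogeneous hF, hvan]
  · rw [hF.coeff_eq_zero, map_zero]
    rwa [map_nsmul, smul_eq_mul, Ne, mul_eq_left₀ hp]

end IsStdSplitting

theorem isHomogeneous_prod_toMvPolynomial_pow {ι σ R : Type*} [Fintype ι] [Fintype σ]
    [CommSemiring R] (a : Matrix ι σ R) (q : ι → ℕ) :
    (∏ i, a.toMvPolynomial i ^ q i).IsHomogeneous (∑ i, q i) :=
  .prod _ _ _ fun i _ => by simpa using (a.toMvPolynomial_isHomogeneous i).pow (q i)

theorem eval_single_prod_toMvPolynomial_pow {ι σ R : Type*} [Fintype ι] [Fintype σ]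
    [DecidableEq σ] [CommSemiring R] (a : Matrix ι σ R) (q : ι → ℕ) (k : σ) :
    eval (Pi.single k 1) (∏ i, a.toMvPolynomial i ^ q i) = ∏ i, a i k ^ q i := by
  simp only [map_prod, map_pow, Matrix.toMvPolynomial_eval_eq_apply, Matrix.mulVec_single_one,
    Matrix.col_apply]

theorem stmt3_general {p r : ℕ} (hp : p ≠ 0) {R ι : Type*} [CommRing R] [Fintype ι]
    {φ : R →+ R} {Φ : MvPolynomial (Fin r) R →+ MvPolynomial (Fin r) R}
    (hΦ : IsStdSplitting p φ Φ) (a : Matrix ι (Fin r) R) (c : R) (q : ι → ℕ)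
    (hq : ∑ i, q i = p) (hvan : ∀ k, φ (c * ∏ i, a i k ^ q i) = 0) :
    Φ (C c * ∏ i, a.toMvPolynomial i ^ q i) = 0 := by
  refine hΦ.map_eq_zero_of_isHomogeneous hp ?_ fun k => ?_
  · exact hq ▸ (isHomogeneous_prod_toMvPolynomial_pow a q).C_mul c
  · rw [eval_mul, eval_C, eval_single_prod_toMvPolynomial_pow, hvan]

/-- Key vanishing step in Lemma 2.2: under the vanishing hypothesis on `φ`,
`Φ(c (a₁₁X + a₁₂Y)^{q₁} (a₂₁X + a₂₂Y)^{q₂}) = 0` whenever `1 ≤ q₁ ≤ p - 1` and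
`q₁ + q₂ = p`. -/
theorem stmt3 (p : ℕ) (hp : p.Prime) (R : Type*) [CommRing R] [CharP R p]
    (φ : R →+ R) (hφ : IsFrobeniusSplitting p φ)
    (Φ : MvPolynomial (Fin 2) R →+ MvPolynomial (Fin 2) R)
    (hΦ : IsStdSplitting p φ Φ)
    (a : Matrix (Fin 2) (Fin 2) R)
    (hvan : ∀ (c : R) (s : ℕ), 1 ≤ s → s ≤ p - 1 →
      φ (c * (a 0 0 ^ s * a 1 0 ^ (p - s))) = 0 ∧
      φ (c * (a 0 1 ^ s * a 1 1 ^ (p - s))) = 0) :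
    ∀ (c : R) (q₁ q₂ : ℕ), 1 ≤ q₁ → q₁ ≤ p - 1 → q₁ + q₂ = p →
      Φ (C c * (C (a 0 0) * X 0 + C (a 0 1) * X 1) ^ q₁ *
          (C (a 1 0) * X 0 + C (a 1 1) * X 1) ^ q₂) = 0 := by
  rintro c q₁ q₂ hq₁ hq₁p rfl
  have hvan' : ∀ k, φ (c * ∏ i, a i k ^ ![q₁, q₂] i) = 0 :=
    Fin.forall_fin_two.mpr (by simpa using hvan c q₁ hq₁ hq₁p)
  simpa [Matrix.toMvPolynomial, ← C_mul_X_eq_monomial, mul_assoc] using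
    stmt3_general hp.ne_zero hΦ a c ![q₁, q₂] (by simp) hvan'
end

section
/- Let p be a prime, k a perfect field of characteristic p, φ : k → k the p-th root map (the unique Frobenius splitting of k), and Φ the standard splitting of k[X,Y] associated to φ. Let σ be the k-algebra automorphism of k[X,Y] with σ(X) = X + Y and σ(Y) = Y. Then Φ(σ(X·Y^{p−1})) = Y while σ(Φ(X·Y^{p−1})) = 0; in particular Φ ∘ σ ≠ σ ∘ Φ, so the standard splitting of the polynomial ring in two variables depends on the choice of basis. -/
open MvPolynomial

/-- The shear automorphism `σ` of `k[X,Y]` with `σ X = X + Y`, `σ Y = Y`. -/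
noncomputable def shear (k : Type*) [CommRing k] :
    MvPolynomial (Fin 2) k →ₐ[k] MvPolynomial (Fin 2) k :=
  aeval ![X 0 + X 1, X 1]

namespace IsStdSplitting

variable {p : ℕ} {R : Type*} [CommRing R] {r : ℕ} {φ : R →+ R}
  {Φ : MvPolynomial (Fin r) R →+ MvPolynomial (Fin r) R}

theorem map_monomial_eq_zero (hΦ : IsStdSplitting p φ Φ) {I : Fin r →₀ ℕ} {i : Fin r}
    (hi : ¬ p ∣ I i) (c : R) : Φ (monomial I c) = 0 := by
  rw [hΦ, if_neg fun h => hi (h i)]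

theorem map_monomial_nsmul (hΦ : IsStdSplitting p φ Φ) (hp : p ≠ 0) (I : Fin r →₀ ℕ) (c : R) :
    Φ (monomial (p • I) c) = monomial I (φ c) := by
  have hdiv : (p • I).mapRange (· / p) (Nat.zero_div p) = I := by
    ext i
    exact Nat.mul_div_cancel_left (I i) (Nat.pos_of_ne_zero hp)
  have hdvd (i : Fin r) : p ∣ (p • I) i := dvd_mul_right p (I i)
  rw [hΦ, if_pos hdvd, hdiv]

theorem map_X_pow (hΦ : IsStdSplitting p φ Φ) (hφ : φ 1 = 1) (hp : p ≠ 0) (i : Fin r) :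
    Φ (X i ^ p) = X i := by
  have hX : (X i ^ p : MvPolynomial (Fin r) R) = monomial (p • Finsupp.single i 1) 1 := by
    rw [X_pow_eq_monomial, Finsupp.smul_single_one]
  rw [hX, hΦ.map_monomial_nsmul hp, hφ, X]

theorem map_X_mul_X_pow_eq_zero (hΦ : IsStdSplitting p φ Φ) (hp : p ≠ 1) {i j : Fin r}
    (hij : i ≠ j) (n : ℕ) : Φ (X i * X j ^ n) = 0 := by
  have hX : (X i * X j ^ n : MvPolynomial (Fin r) R) =
      monomial (Finsupp.single i 1 + Finsupp.single j n) 1 := by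
    rw [X_pow_eq_monomial, X, monomial_mul, one_mul]
  have hi : (Finsupp.single i 1 + Finsupp.single j n : Fin r →₀ ℕ) i = 1 := by
    simp [hij]
  rw [hX]
  exact hΦ.map_monomial_eq_zero (i := i) (by rwa [hi, Nat.dvd_one]) 1

end IsStdSplitting

theorem shear_X_zero (R : Type*) [CommRing R] : shear R (X 0) = X 0 + X 1 :=
  aeval_X _ 0

theorem shear_X_one (R : Type*) [CommRing R] : shear R (X 1) = X 1 :=
  aeval_X _ 1

theorem shear_X_zero_mul_X_one_pow (R : Type*) [CommRing R] (n : ℕ) :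
    shear R (X 0 * X 1 ^ n) = X 0 * X 1 ^ n + X 1 ^ (n + 1) := by
  rw [map_mul, map_pow, shear_X_zero, shear_X_one, add_mul, pow_succ']

theorem stmt6_general {p : ℕ} (hp : 1 < p) {R : Type*} [CommRing R] [Nontrivial R]
    {φ : R →+ R} (hφ : φ 1 = 1) {Φ : MvPolynomial (Fin 2) R →+ MvPolynomial (Fin 2) R}
    (hΦ : IsStdSplitting p φ Φ) :
    Φ (shear R (X 0 * X 1 ^ (p - 1))) = X 1 ∧
      shear R (Φ (X 0 * X 1 ^ (p - 1))) = 0 ∧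
      ⇑Φ ∘ ⇑(shear R) ≠ ⇑(shear R) ∘ ⇑Φ := by
  have hmixed : Φ (X 0 * X 1 ^ (p - 1)) = 0 :=
    hΦ.map_X_mul_X_pow_eq_zero hp.ne' zero_ne_one (p - 1)
  have hleft : Φ (shear R (X 0 * X 1 ^ (p - 1))) = X 1 := by
    rw [shear_X_zero_mul_X_one_pow, map_add, hmixed, zero_add, Nat.sub_add_cancel hp.le,
      hΦ.map_X_pow hφ (Nat.ne_zero_of_lt hp)]
  have hright : shear R (Φ (X 0 * X 1 ^ (p - 1))) = 0 := by rw [hmixed, map_zero]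
  refine ⟨hleft, hright, fun hcomm => X_ne_zero (R := R) (1 : Fin 2) ?_⟩
  calc
    X 1 = Φ (shear R (X 0 * X 1 ^ (p - 1))) := hleft.symm
    _ = shear R (Φ (X 0 * X 1 ^ (p - 1))) := congrFun hcomm _
    _ = 0 := hright

/-- For `k` a perfect field of characteristic `p`, `φ` the `p`-th root map, and `Φ`
the standard splitting of `k[X,Y]` associated to `φ`:
`Φ(σ(X Y^{p-1})) = Y` while `σ(Φ(X Y^{p-1})) = 0`, so `Φ ∘ σ ≠ σ ∘ Φ`;
the standard splitting depends on the choice of basis. -/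
theorem stmt6 (p : ℕ) [Fact p.Prime] (k : Type*) [Field k] [CharP k p] [PerfectRing k p]
    (Φ : MvPolynomial (Fin 2) k →+ MvPolynomial (Fin 2) k)
    (hΦ : IsStdSplitting p ((frobeniusEquiv k p).symm.toRingHom.toAddMonoidHom) Φ) :
    Φ (shear k (X 0 * X 1 ^ (p - 1))) = X 1 ∧
      shear k (Φ (X 0 * X 1 ^ (p - 1))) = 0 ∧
      ⇑Φ ∘ ⇑(shear k) ≠ ⇑(shear k) ∘ ⇑Φ :=
  stmt6_general (Fact.out : p.Prime).one_lt (map_one (frobeniusEquiv k p).symm) hΦ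
end
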